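/- arXiv:2403.06270 — 2 statements merged into one kernel-verified Lean document; each statement's English description precedes it below -/
import Mathlib

section
/- Let n ≥ 1 and f ∈ k⟨x_1,…,x_d⟩. If det f(X) = 0 for every X ∈ M_n(k)^d (i.e. f takes only singular values on n×n matrix tuples), then f(X) = 0 for every X ∈ M_n(k)^d (i.e. f is a polynomial identity of n×n matrices). -/
/-- Evaluation of a noncommutative polynomial at a tuple of `n × n` matrices. -/
noncomputable def ncEval {k : Type*} [CommSemiring k] {d n : ℕ}
    (X : Fin d → Matrix (Fin n) (Fin n) k) (f : FreeAlgebra k (Fin d)) :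
    Matrix (Fin n) (Fin n) k :=
  FreeAlgebra.lift k X f

/-!
It suffices to show that the value `F` of `f` at the generic matrices `(t_{v,i,j})` over the
polynomial ring `k[t]` vanishes or has nonzero determinant.  Rescale the variables by
`t_{v,i,j} ↦ t_{v,i,j} y ^ ((j - i) mod n)`.  The rescaled generic matrices, hence also the rescaled
`F`, are equivariant under the simultaneous cyclic shift of row, column and variable indices, and
`y ^ N` occurs in the entry `(i, j)` only if `j - i ≡ N` modulo `n`.  If `F ≠ 0`, let `N` be the
largest `y`-degree of an entry.  The coefficients of `y ^ N` form a matrix supported on the cyclic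
permutation `i ↦ i + N`; all its entries there are nonzero because they are shifts of one another.
Its determinant is thus nonzero, and it is a coefficient of the determinant of the rescaled `F`.
-/

open Polynomial

theorem exists_natDegree_le_and_coeff_ne_zero {m m' R : Type*} [Finite m] [Finite m']
    [Semiring R] {M : Matrix m m' R[X]} (hM : M ≠ 0) :
    ∃ N, (∀ i j, (M i j).natDegree ≤ N) ∧ ∃ i j, (M i j).coeff N ≠ 0 := by
  obtain ⟨i, j, hij⟩ : ∃ i j, M i j ≠ 0 := by
    contrapose! hM
    exact Matrix.ext hM
  have : Nonempty (m × m') := ⟨(i, j)⟩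
  obtain ⟨⟨i₀, j₀⟩, hmax⟩ := Finite.exists_max fun p : m × m' => (M p.1 p.2).degree
  have hne : M i₀ j₀ ≠ 0 := fun h0 => hij <| by simpa [h0] using hmax (i, j)
  exact ⟨(M i₀ j₀).natDegree,
    fun i j => natDegree_le_natDegree (hmax (i, j)),
    i₀, j₀, leadingCoeff_ne_zero.2 hne⟩

section Determinants

variable {m R : Type*} [Fintype m] [DecidableEq m] [CommRing R]

theorem det_ne_zero_of_ne_zero_iff_eq_perm [IsDomain R] {M : Matrix m m R} (π : Equiv.Perm m)
    (hM : ∀ i j, M i j ≠ 0 ↔ j = π i) : M.det ≠ 0 := by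
  have hdiag : M.submatrix id π = Matrix.diagonal fun i => M i (π i) := by
    ext i j
    by_cases hij : i = j
    · subst hij
      simp
    · rw [Matrix.diagonal_apply_ne _ hij]
      by_contra hne
      exact hij (π.injective ((hM i (π j)).1 hne)).symm
  have hdet : (M.submatrix id π).det ≠ 0 := by
    rw [hdiag, Matrix.det_diagonal, Finset.prod_ne_zero_iff]
    exact fun i _ => (hM i (π i)).2 rfl
  rw [Matrix.det_permute'] at hdet
  exact right_ne_zero_of_mul hdet

theorem coeff_det_card_mul {M : Matrix m m R[X]} {N : ℕ} (hN : ∀ i j, (M i j).natDegree ≤ N) :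
    M.det.coeff (Fintype.card m * N) = (M.map fun p => p.coeff N).det := by
  rw [Matrix.det_apply', Matrix.det_apply', finsetSum_coeff]
  refine Finset.sum_congr rfl fun σ _ => ?_
  rw [← C_eq_intCast, coeff_C_mul, ← Finset.card_univ,
    coeff_prod_of_natDegree_le _ _ N fun i _ => hN _ _]
  rfl

end Determinants

section TwistedMatrices

variable {k A G : Type*} [CommRing k] [CommRing A] [Algebra k A]
  [AddGroup G] [Fintype G] [DecidableEq G]

/-- Matrices indexed by a group whose entries are permuted by simultaneous right translation of the
row and column indices up to the endomorphisms `σ r`. -/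
def equivariantMatrices (σ : G → A →ₐ[k] A) : Subalgebra k (Matrix G G A) where
  carrier := {M | ∀ r i j, M (i + r) (j + r) = σ r (M i j)}
  mul_mem' {M M'} hM hM' r i j := by
    rw [Matrix.mul_apply, Matrix.mul_apply, map_sum, ← Equiv.sum_comp (Equiv.addRight r)]
    exact Finset.sum_congr rfl fun x _ => by
      rw [Equiv.coe_addRight, hM, hM', map_mul]
  add_mem' hM hM' r i j := by
    rw [Matrix.add_apply, Matrix.add_apply, map_add, hM, hM']
  algebraMap_mem' c r i j := by
    simp only [Matrix.algebraMap_matrix_apply, add_left_inj, apply_ite (σ r), AlgHom.commutes,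
      map_zero]

variable (k A) in
/-- Polynomial matrices indexed by a group in which the monomial of degree `N` occurs only at the
positions `(i, N • e + i)`.  For `G = ℤ/n` and `e = 1` these are the degrees congruent to `j - i`
in the entry `(i, j)`. -/
def degreeGradedMatrices (e : G) : Subalgebra k (Matrix G G A[X]) where
  carrier := {M | ∀ i j N, (M i j).coeff N ≠ 0 → j = N • e + i}
  mul_mem' {M M'} hM hM' i j N hN := by
    rw [Matrix.mul_apply, finsetSum_coeff] at hN
    obtain ⟨x, -, hx⟩ := Finset.exists_ne_zero_of_sum_ne_zero hN
    rw [coeff_mul] at hx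
    obtain ⟨⟨a, b⟩, hab, hprod⟩ := Finset.exists_ne_zero_of_sum_ne_zero hx
    rw [hM' x j b (right_ne_zero_of_mul hprod), hM i x a (left_ne_zero_of_mul hprod),
      ← add_assoc, ← add_nsmul, add_comm b a, Finset.HasAntidiagonal.mem_antidiagonal.1 hab]
  add_mem' {M M'} hM hM' i j N hN := by
    rw [Matrix.add_apply, coeff_add] at hN
    by_cases hMN : (M i j).coeff N = 0
    · exact hM' i j N (by rwa [hMN, zero_add] at hN)
    · exact hM i j N hMN
  algebraMap_mem' c i j N hN := by
    rw [Matrix.algebraMap_matrix_apply] at hN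
    split_ifs at hN with hij
    · rw [Polynomial.algebraMap_apply, coeff_C] at hN
      split_ifs at hN with hN0
      · rw [hN0, zero_nsmul, zero_add, hij]
      · exact absurd rfl hN
    · exact absurd (coeff_zero N) hN

theorem det_ne_zero_of_mem_equivariant_of_mem_degreeGraded [IsDomain A] {σ : G → A →ₐ[k] A}
    (hσ : ∀ r, Function.Injective (σ r)) {e : G} {M : Matrix G G A[X]}
    (hequiv : M ∈ equivariantMatrices fun r => mapAlgHom (σ r))
    (hgraded : M ∈ degreeGradedMatrices k A e) (hM : M ≠ 0) : M.det ≠ 0 := by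
  obtain ⟨N, hdeg, i₀, j₀, hcoeff⟩ := exists_natDegree_le_and_coeff_ne_zero hM
  have hshift (r : G) : (M (i₀ + r) (j₀ + r)).coeff N ≠ 0 := by
    rw [hequiv r i₀ j₀, coe_mapAlgHom, coeff_map]
    exact (map_ne_zero_iff (σ r) (hσ r)).2 hcoeff
  have hsupport (i j : G) : (M i j).coeff N ≠ 0 ↔ j = Equiv.addLeft (N • e) i := by
    refine ⟨hgraded i j N, ?_⟩
    rintro rfl
    simpa [hgraded i₀ j₀ N hcoeff, add_assoc] using hshift (-i₀ + i)
  have hlead : M.det.coeff (Fintype.card G * N) ≠ 0 := by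
    rw [coeff_det_card_mul hdeg]
    exact det_ne_zero_of_ne_zero_iff_eq_perm _ hsupport
  intro hdet
  exact hlead (by rw [hdet, coeff_zero])

end TwistedMatrices

section FreeAlgebraEvaluation

variable {k ι : Type*} [CommSemiring k]

theorem freeAlgebra_lift_mem {B : Type*} [Semiring B] [Algebra k B] {S : Subalgebra k B} {Y : ι → B}
    (hY : ∀ v, Y v ∈ S) (f : FreeAlgebra k ι) : FreeAlgebra.lift k Y f ∈ S := by
  have hadjoin : Algebra.adjoin k (Set.range Y) ≤ S :=
    Algebra.adjoin_le (Set.range_subset_iff.2 hY)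
  rw [Algebra.adjoin_range_eq_range_freeAlgebra_lift] at hadjoin
  exact hadjoin ⟨f, rfl⟩

theorem mapMatrix_freeAlgebra_lift {m A B : Type*} [Fintype m] [DecidableEq m]
    [CommSemiring A] [Algebra k A] [CommSemiring B] [Algebra k B] (φ : A →ₐ[k] B)
    (Y : ι → Matrix m m A) (f : FreeAlgebra k ι) :
    φ.mapMatrix (FreeAlgebra.lift k Y f) =
      FreeAlgebra.lift k (fun v => φ.mapMatrix (Y v)) f := by
  have hcomp : φ.mapMatrix.comp (FreeAlgebra.lift k Y) =
      FreeAlgebra.lift k fun v => φ.mapMatrix (Y v) := by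
    ext v : 2
    simp
  exact DFunLike.congr_fun hcomp f

end FreeAlgebraEvaluation

section GenericMatrices

variable {k ι m : Type*} [CommRing k]

variable (k m) in
/-- The generic matrices, whose entries are independent commuting variables `t_{v,i,j}`: every tuple
of matrices over `k` is a specialization of them. -/
noncomputable def genericMatrix (v : ι) : Matrix m m (MvPolynomial (ι × m × m) k) :=
  Matrix.of fun i j => MvPolynomial.X (v, i, j)

theorem mapMatrix_aeval_lift_genericMatrix [Fintype m] [DecidableEq m]
    {A : Type*} [CommRing A] [Algebra k A] (Y : ι → Matrix m m A) (f : FreeAlgebra k ι) :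
    (MvPolynomial.aeval fun p : ι × m × m => Y p.1 p.2.1 p.2.2).mapMatrix
        (FreeAlgebra.lift k (genericMatrix k m) f) = FreeAlgebra.lift k Y f := by
  rw [mapMatrix_freeAlgebra_lift]
  congr 2
  ext v i j
  simp [genericMatrix]

theorem det_lift_genericMatrix_eq_zero [Fintype m] [DecidableEq m] [IsDomain k] [Infinite k]
    {f : FreeAlgebra k ι} (h : ∀ Y : ι → Matrix m m k, (FreeAlgebra.lift k Y f).det = 0) :
    (FreeAlgebra.lift k (genericMatrix k m) f).det = 0 := by
  refine MvPolynomial.funext fun t => ?_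
  have hspec := h fun v => Matrix.of fun i j => t (v, i, j)
  rw [← mapMatrix_aeval_lift_genericMatrix, ← AlgHom.map_det] at hspec
  rwa [map_zero, ← MvPolynomial.coe_aeval_eq_eval]

variable {n : ℕ}

variable (k n) in
/-- The generic matrices rescaled by powers of a further variable, `t_{v,i,j} y ^ ((j - i) mod n)`:
generic elements of a cyclic algebra, written as matrices over `k[t][y]`. -/
noncomputable def genericCyclicMatrix [NeZero n] (v : ι) :
    Matrix (Fin n) (Fin n) (MvPolynomial (ι × Fin n × Fin n) k)[X] :=
  Matrix.of fun i j => monomial (j - i : Fin n).val (MvPolynomial.X (v, i, j))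

variable (k ι) in
/-- The automorphism `t_{v,i,j} ↦ t_{v,i+r,j+r}` of the ring of entries of the generic matrices. -/
noncomputable def shiftVariables (r : Fin n) :
    MvPolynomial (ι × Fin n × Fin n) k →ₐ[k] MvPolynomial (ι × Fin n × Fin n) k :=
  MvPolynomial.rename (Prod.map id (Prod.map (· + r) (· + r)))

theorem shiftVariables_injective (r : Fin n) : Function.Injective (shiftVariables k ι r) :=
  MvPolynomial.rename_injective _ <| Function.injective_id.prodMap <|
    (add_left_injective r).prodMap (add_left_injective r)

variable [NeZero n]

theorem genericCyclicMatrix_mem_equivariantMatrices (v : ι) :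
    genericCyclicMatrix k n v ∈ equivariantMatrices fun r => mapAlgHom (shiftVariables k ι r) := by
  intro r i j
  simp [genericCyclicMatrix, shiftVariables, map_monomial]

theorem fin_val_nsmul_one (a : Fin n) : a.val • (1 : Fin n) = a := by
  open Fin.NatCast in
  rw [nsmul_one, Fin.cast_val_eq_self]

theorem genericCyclicMatrix_mem_degreeGradedMatrices (v : ι) :
    genericCyclicMatrix k n v ∈ degreeGradedMatrices k _ (1 : Fin n) := by
  intro i j N hN
  rw [genericCyclicMatrix, Matrix.of_apply, coeff_monomial] at hN
  obtain rfl : (j - i : Fin n).val = N := by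
    by_contra hne
    exact hN (if_neg hne)
  rw [fin_val_nsmul_one, sub_add_cancel]

theorem det_lift_genericCyclicMatrix_ne_zero [IsDomain k] {f : FreeAlgebra k ι}
    (hf : FreeAlgebra.lift k (genericCyclicMatrix k n) f ≠ 0) :
    (FreeAlgebra.lift k (genericCyclicMatrix k n) f).det ≠ 0 :=
  det_ne_zero_of_mem_equivariant_of_mem_degreeGraded shiftVariables_injective
    (freeAlgebra_lift_mem genericCyclicMatrix_mem_equivariantMatrices f)
    (freeAlgebra_lift_mem genericCyclicMatrix_mem_degreeGradedMatrices f) hf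

theorem lift_eq_zero_of_lift_genericCyclicMatrix_eq_zero {f : FreeAlgebra k ι}
    (hf : FreeAlgebra.lift k (genericCyclicMatrix k n) f = 0)
    (Y : ι → Matrix (Fin n) (Fin n) k) : FreeAlgebra.lift k Y f = 0 := by
  let specialize : (MvPolynomial (ι × Fin n × Fin n) k)[X] →ₐ[k] k :=
    (MvPolynomial.aeval fun p : ι × Fin n × Fin n => Y p.1 p.2.1 p.2.2).comp
      ((aeval 1).restrictScalars k)
  have hY : (fun v => specialize.mapMatrix (genericCyclicMatrix k n v)) = Y := by
    ext v i j
    simp [specialize, genericCyclicMatrix]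
  rw [← hY, ← mapMatrix_freeAlgebra_lift, hf, map_zero]

end GenericMatrices

theorem singular_values_imp_identity_general {k ι : Type*} [CommRing k] [IsDomain k] [Infinite k]
    {n : ℕ} {f : FreeAlgebra k ι}
    (h : ∀ X : ι → Matrix (Fin n) (Fin n) k, (FreeAlgebra.lift k X f).det = 0)
    (X : ι → Matrix (Fin n) (Fin n) k) : FreeAlgebra.lift k X f = 0 := by
  obtain rfl | hn := eq_or_ne n 0
  · exact Subsingleton.elim _ _
  have : NeZero n := ⟨hn⟩
  apply lift_eq_zero_of_lift_genericCyclicMatrix_eq_zero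
  by_contra hf
  apply det_lift_genericCyclicMatrix_ne_zero hf
  rw [← mapMatrix_aeval_lift_genericMatrix, ← AlgHom.map_det, det_lift_genericMatrix_eq_zero h,
    map_zero]

/-- If a noncommutative polynomial takes only singular values on `n × n` matrix
tuples, then it is a polynomial identity of `n × n` matrices. -/
theorem singular_values_imp_identity
    (k : Type*) [Field k] [IsAlgClosed k] [CharZero k]
    (d n : ℕ) (hd : 1 ≤ d) (hn : 1 ≤ n) (f : FreeAlgebra k (Fin d))
    (h : ∀ X : Fin d → Matrix (Fin n) (Fin n) k, (ncEval X f).det = 0) :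
    ∀ X : Fin d → Matrix (Fin n) (Fin n) k, ncEval X f = 0 := by
  exact singular_values_imp_identity_general h
end

section
/- Let f ∈ k⟨x_1,…,x_d⟩ be nonconstant (i.e. f ∉ k·1). Then there exists n_0 ∈ ℕ such that for every n ≥ n_0 there is a tuple X ∈ M_n(k)^d for which the matrix f(X) has n pairwise distinct eigenvalues. -/
/-!
The leading form of `f` is a nonzero form of degree `m ≥ 1`, and `f` degenerates to it when the
generators are scaled up; since having simple spectrum is a Zariski open condition, it suffices to
treat the leading form. Let the generators act on `ℤ/n` by weighted cyclic shifts. A form of degree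
`m` then acts by a weighted shift by `m` steps whose weights do not vanish for a generic choice, as
soon as `m ≤ n`. When moreover `n` is invertible in `k` and prime to `m`, conjugation by characters
of `ℤ/n` shows that the spectrum is stable under multiplication by a primitive `n`-th root of unity,
so the `n` eigenvalues are nonzero and distinct. Finally, the sizes `n` at which a form attains an
invertible value with simple spectrum are closed under addition: scale one block so that the spectra
of the two blocks become disjoint. They include numbers with greatest common divisor `1`, hence all
large `n`.
-/

open Polynomial
open scoped Pointwise

section Words

variable {k α A : Type*} [CommSemiring k] [Semiring A] [Algebra k A]

/-- The coefficients of a noncommutative polynomial in the basis of words. -/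
noncomputable def wordCoeff (f : FreeAlgebra k α) : FreeMonoid α →₀ k :=
  (FreeAlgebra.basisFreeMonoid k α).repr f

theorem basisFreeMonoid_apply (w : FreeMonoid α) :
    FreeAlgebra.basisFreeMonoid k α w = FreeMonoid.lift (FreeAlgebra.ι k) w := by
  simp [FreeAlgebra.basisFreeMonoid, FreeAlgebra.equivMonoidAlgebraFreeMonoid]

theorem sum_wordCoeff_smul_lift_ι (f : FreeAlgebra k α) :
    ∑ w ∈ (wordCoeff f).support, wordCoeff f w • FreeMonoid.lift (FreeAlgebra.ι k) w = f := by
  simpa only [wordCoeff, Finsupp.linearCombination_apply, Finsupp.sum, basisFreeMonoid_apply] using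
    (FreeAlgebra.basisFreeMonoid k α).linearCombination_repr f

theorem lift_eq_sum_wordCoeff (X : α → A) (f : FreeAlgebra k α) :
    FreeAlgebra.lift k X f =
      ∑ w ∈ (wordCoeff f).support, wordCoeff f w • FreeMonoid.lift X w := by
  have lift_word (w : FreeMonoid α) :
      FreeAlgebra.lift k X (FreeMonoid.lift (FreeAlgebra.ι k) w) = FreeMonoid.lift X w := by
    simp [FreeMonoid.lift_apply, map_list_prod, Function.comp_def]
  conv_lhs => rw [← sum_wordCoeff_smul_lift_ι f]
  simp only [map_sum, map_smul, lift_word]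

theorem freeMonoid_lift_smul (s : k) (X : α → A) (w : FreeMonoid α) :
    FreeMonoid.lift (s • X) w = s ^ w.length • FreeMonoid.lift X w := by
  induction w using FreeMonoid.inductionOn' with
  | one => simp
  | of_mul x w ih => simp [ih, FreeMonoid.length_mul, pow_add, ← mul_smul, mul_comm]

/-- A noncommutative form of degree `m`: a linear combination of words of length `m`. The zero
polynomial is a form of every degree. -/
def IsWordHomogeneous (f : FreeAlgebra k α) (m : ℕ) : Prop :=
  ∀ w ∈ (wordCoeff f).support, w.length = m

theorem IsWordHomogeneous.lift_smul {f : FreeAlgebra k α} {m : ℕ} (hf : IsWordHomogeneous f m)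
    (s : k) (X : α → A) : FreeAlgebra.lift k (s • X) f = s ^ m • FreeAlgebra.lift k X f := by
  simp only [lift_eq_sum_wordCoeff, Finset.smul_sum, freeMonoid_lift_smul]
  exact Finset.sum_congr rfl fun w hw => by rw [hf w hw, smul_comm]

/-- The degree of a noncommutative polynomial, counting each generator with degree `1`. The zero
polynomial has degree `0`. -/
noncomputable def wordDegree (f : FreeAlgebra k α) : ℕ :=
  (wordCoeff f).support.sup FreeMonoid.length

theorem length_le_wordDegree {f : FreeAlgebra k α} {w : FreeMonoid α}
    (hw : w ∈ (wordCoeff f).support) : w.length ≤ wordDegree f :=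
  Finset.le_sup (f := FreeMonoid.length) hw

theorem wordDegree_ne_zero {f : FreeAlgebra k α}
    (hf : f ∉ Set.range (algebraMap k (FreeAlgebra k α))) : wordDegree f ≠ 0 := by
  contrapose! hf
  have support_subset : (wordCoeff f).support ⊆ {1} := fun w hw => by
    simpa [hf] using length_le_wordDegree hw
  refine ⟨wordCoeff f 1, ?_⟩
  have single_eq := sum_wordCoeff_smul_lift_ι f
  rw [Finset.sum_subset support_subset fun w _ hw => by simp [Finsupp.notMem_support_iff.1 hw],
    Finset.sum_singleton] at single_eq
  simpa [Algebra.algebraMap_eq_smul_one] using single_eq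

/-- The leading form of a noncommutative polynomial: its component of top degree. -/
noncomputable def leadingForm (f : FreeAlgebra k α) : FreeAlgebra k α :=
  (FreeAlgebra.basisFreeMonoid k α).repr.symm
    ((wordCoeff f).filter fun w => w.length = wordDegree f)

theorem wordCoeff_leadingForm (f : FreeAlgebra k α) :
    wordCoeff (leadingForm f) = (wordCoeff f).filter fun w => w.length = wordDegree f :=
  (FreeAlgebra.basisFreeMonoid k α).repr.apply_symm_apply _

theorem isWordHomogeneous_leadingForm (f : FreeAlgebra k α) :
    IsWordHomogeneous (leadingForm f) (wordDegree f) := by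
  intro w hw
  rw [wordCoeff_leadingForm, Finsupp.support_filter] at hw
  exact (Finset.mem_filter.1 hw).2

theorem wordCoeff_ne_zero {f : FreeAlgebra k α} (hf : f ≠ 0) : wordCoeff f ≠ 0 :=
  (map_ne_zero_iff _ (FreeAlgebra.basisFreeMonoid k α).repr.injective).2 hf

theorem leadingForm_ne_zero {f : FreeAlgebra k α} (hf : f ≠ 0) : leadingForm f ≠ 0 := by
  obtain ⟨w, hw, w_length⟩ : ∃ w ∈ (wordCoeff f).support, wordDegree f = w.length :=
    Finset.exists_mem_eq_sup _ (Finsupp.support_nonempty_iff.2 (wordCoeff_ne_zero hf)) _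
  intro h
  have coeff_eq : wordCoeff (leadingForm f) w = wordCoeff f w := by
    rw [wordCoeff_leadingForm]
    exact Finsupp.filter_apply_pos _ _ w_length.symm
  rw [h] at coeff_eq
  exact Finsupp.mem_support_iff.1 hw (by simpa [wordCoeff] using coeff_eq.symm)

end Words

section Spectrum

variable {k ι κ : Type*} [Field k] [Fintype ι] [DecidableEq ι] [Fintype κ] [DecidableEq κ]

/-- A matrix has simple spectrum if its eigenvalues in `k` are as many as its size, hence pairwise
distinct and all of algebraic multiplicity one. -/
def HasSimpleSpectrum (M : Matrix ι ι k) : Prop :=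
  (spectrum k M).ncard = Fintype.card ι

theorem spectrum_eq_rootSet_charpoly (M : Matrix ι ι k) :
    spectrum k M = M.charpoly.rootSet k := by
  ext t
  rw [Matrix.mem_spectrum_iff_isRoot_charpoly, mem_rootSet_of_ne M.charpoly_monic.ne_zero,
    coe_aeval_eq_eval, IsRoot.def]

theorem ncard_spectrum_le_card (M : Matrix ι ι k) : (spectrum k M).ncard ≤ Fintype.card ι := by
  rw [spectrum_eq_rootSet_charpoly, ← M.charpoly_natDegree_eq_dim]
  exact ncard_rootSet_le _ _

theorem hasSimpleSpectrum_iff_separable_charpoly [IsAlgClosed k] (M : Matrix ι ι k) :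
    HasSimpleSpectrum M ↔ M.charpoly.Separable := by
  rw [HasSimpleSpectrum, spectrum_eq_rootSet_charpoly, ← M.charpoly_natDegree_eq_dim,
    ← Nat.card_coe_set_eq, Nat.card_eq_fintype_card]
  exact card_rootSet_eq_natDegree_iff_of_splits M.charpoly_monic.ne_zero (IsAlgClosed.splits _)

theorem HasSimpleSpectrum.exists_injective_eigenvalues {n : ℕ} {M : Matrix (Fin n) (Fin n) k}
    (hM : HasSimpleSpectrum M) : ∃ mu : Fin n → k, Function.Injective mu ∧
      ∀ i, ∃ v : Fin n → k, v ≠ 0 ∧ M.mulVec v = mu i • v := by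
  let e : Fin n ≃ spectrum k M :=
    (Finite.equivFinOfCardEq (hM.trans (Fintype.card_fin n))).symm
  refine ⟨fun i => e i, Subtype.val_injective.comp e.injective, fun i => ?_⟩
  have hasEigenvalue : Module.End.HasEigenvalue (Matrix.toLin' M) (e i : k) := by
    rw [Module.End.hasEigenvalue_iff_mem_spectrum, Matrix.spectrum_toLin']
    exact (e i).2
  obtain ⟨v, hv⟩ := hasEigenvalue.exists_hasEigenvector
  exact ⟨v, hv.2, hv.apply_eq_smul⟩

theorem spectrum_smul_of_ne_zero {A : Type*} [Ring A] [Algebra k A] (a : A) {c : k} (hc : c ≠ 0) :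
    spectrum k (c • a) = c • spectrum k a :=
  spectrum.unit_smul_eq_smul a (Units.mk0 c hc)

theorem HasSimpleSpectrum.smul {M : Matrix ι ι k} (hM : HasSimpleSpectrum M) {c : k}
    (hc : c ≠ 0) : HasSimpleSpectrum (c • M) := by
  rw [HasSimpleSpectrum, spectrum_smul_of_ne_zero M hc, ← Set.image_smul,
    Set.ncard_image_of_injective _ (smul_right_injective k hc), hM]

theorem HasSimpleSpectrum.reindex {M : Matrix ι ι k} (hM : HasSimpleSpectrum M) (e : ι ≃ κ) :
    HasSimpleSpectrum (Matrix.reindexAlgEquiv k k e M) := by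
  rw [HasSimpleSpectrum, AlgEquiv.spectrum_eq, hM, Fintype.card_congr e]

theorem spectrum_fromBlocks_zero_zero (A : Matrix ι ι k) (B : Matrix κ κ k) :
    spectrum k (Matrix.fromBlocks A 0 0 B) = spectrum k A ∪ spectrum k B := by
  ext t
  simp only [Set.mem_union, Matrix.mem_spectrum_iff_isRoot_charpoly,
    Matrix.charpoly_fromBlocks_zero₁₂, root_mul]

theorem HasSimpleSpectrum.fromBlocks_zero_zero {A : Matrix ι ι k} {B : Matrix κ κ k}
    (hA : HasSimpleSpectrum A) (hB : HasSimpleSpectrum B)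
    (hAB : Disjoint (spectrum k A) (spectrum k B)) :
    HasSimpleSpectrum (Matrix.fromBlocks A 0 0 B) := by
  rw [HasSimpleSpectrum, spectrum_fromBlocks_zero_zero,
    Set.ncard_union_eq hAB A.finite_spectrum B.finite_spectrum, hA, hB, Fintype.card_sum]

theorem exists_ne_zero_disjoint_spectrum_smul [Infinite k] {A : Matrix ι ι k} (hA : IsUnit A)
    (B : Matrix κ κ k) : ∃ c : k, c ≠ 0 ∧ Disjoint (spectrum k A) (spectrum k (c • B)) := by
  obtain ⟨c, hc⟩ :=
    ((A.finite_spectrum.image2 (· / ·) B.finite_spectrum).insert 0).exists_notMem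
  obtain ⟨hc₀, hc⟩ := not_or.1 hc
  refine ⟨c, hc₀, Set.disjoint_left.2 fun a ha hac => hc ?_⟩
  rw [spectrum_smul_of_ne_zero B hc₀] at hac
  obtain ⟨b, hb, rfl⟩ := hac
  have hb₀ : b ≠ 0 := by
    rintro rfl
    exact spectrum.zero_notMem k hA (by simpa using ha)
  exact ⟨c * b, ha, b, hb, mul_div_cancel_right₀ c hb₀⟩

end Spectrum

section PathWeight

variable {G R α : Type*} [AddMonoidWithOne G] [CommMonoid R]

/-- The weight of the path spelled by a word `w` and starting at `i`: reading the `p`-th letter `x`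
of `w` moves from `i + p` to `i + p + 1` and contributes the factor `a x (i + p)`. -/
def pathWeight (a : α → G → R) (w : List α) (i : G) : R :=
  ∏ p : Fin w.length, a w[p] (i + (p : ℕ))

theorem pathWeight_cons (a : α → G → R) (x : α) (w : List α) (i : G) :
    pathWeight a (x :: w) i = a x i * pathWeight a w (i + 1) := by
  have add_cast_succ (p : ℕ) : i + ((p : G) + 1) = i + 1 + p := by
    rw [add_assoc, ← Nat.cast_one, ← Nat.cast_add, ← Nat.cast_add, Nat.add_comm]
  simp [pathWeight, Fin.prod_univ_succ, add_cast_succ]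

end PathWeight

section Shift

variable {G R α : Type*} [DecidableEq G]

/-- The matrix of the weighted shift `v ↦ (i ↦ g i * v (i + r))` on functions on `G`. -/
def weightedShift [Add G] [Zero R] (r : G) (g : G → R) : Matrix G G R :=
  Matrix.of fun i j => if j = i + r then g i else 0

theorem weightedShift_apply [Add G] [Zero R] (r : G) (g : G → R) (i j : G) :
    weightedShift r g i j = if j = i + r then g i else 0 := rfl

theorem weightedShift_zero_one [AddMonoid G] [Zero R] [One R] :
    weightedShift (0 : G) (1 : G → R) = 1 := by
  ext i j
  simp [weightedShift_apply, Matrix.one_apply, eq_comm]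

theorem weightedShift_mul_weightedShift [Fintype G] [AddSemigroup G] [NonUnitalNonAssocSemiring R]
    (r s : G) (g h : G → R) :
    weightedShift r g * weightedShift s h =
      weightedShift (r + s) fun i => g i * h (i + r) := by
  ext i j
  rw [Matrix.mul_apply, Finset.sum_eq_single (i + r)]
  · simp [weightedShift_apply, add_assoc]
  · intro l _ hl
    simp [weightedShift_apply, hl]
  · simp

theorem weightedShift_sum [Add G] [AddCommMonoid R] {σ : Type*} (r : G)
    (s : Finset σ) (g : σ → G → R) :
    ∑ w ∈ s, weightedShift r (g w) = weightedShift r (∑ w ∈ s, g w) := by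
  ext i j
  simp only [Matrix.sum_apply, weightedShift_apply, Finset.sum_apply]
  split_ifs <;> simp

theorem smul_weightedShift [Add G] [MulZeroClass R] (r : G) (c : R) (g : G → R) :
    c • weightedShift r g = weightedShift r (c • g) := by
  ext i j
  simp [weightedShift_apply]

theorem isUnit_weightedShift [Fintype G] [AddGroup G] [CommRing R] (r : G) {g : G → R}
    (hg : ∀ i, IsUnit (g i)) : IsUnit (weightedShift r g) := by
  refine .of_mul_eq_one (weightedShift (-r) fun i => ↑(hg (i - r)).unit⁻¹) ?_
  rw [weightedShift_mul_weightedShift, add_neg_cancel, ← weightedShift_zero_one]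
  congr 1
  funext i
  simp

theorem smul_spectrum_weightedShift [Fintype G] [AddGroup G] [CommRing R]
    (χ : AddChar G R) (r : G) (g : G → R) :
    χ r • spectrum R (weightedShift r g) = spectrum R (weightedShift r g) := by
  have hχ (i : G) : IsUnit (χ i) := χ.val_isUnit i
  obtain ⟨D, hD⟩ : IsUnit (Matrix.diagonal χ) := Matrix.isUnit_diagonal.2 (Pi.isUnit_iff.2 hχ)
  have semiconj : weightedShift r g * D = D * (χ r • weightedShift r g) := by
    ext i j
    rw [hD, Matrix.mul_diagonal, Matrix.diagonal_mul, Matrix.smul_apply, weightedShift_apply]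
    split_ifs with h
    · rw [h, AddChar.map_add_eq_mul, smul_eq_mul]
      ring
    · simp
  calc χ r • spectrum R (weightedShift r g)
      = spectrum R (χ r • weightedShift r g) :=
        (spectrum.unit_smul_eq_smul _ (hχ r).unit).symm
    _ = spectrum R (↑D⁻¹ * weightedShift r g * D) := by
        rw [mul_assoc, semiconj, Units.inv_mul_cancel_left]
    _ = spectrum R (weightedShift r g) := spectrum.units_conjugate'

theorem freeMonoid_lift_weightedShift_one [Fintype G] [AddMonoidWithOne G] [CommSemiring R]
    (a : α → G → R) (w : FreeMonoid α) :
    FreeMonoid.lift (fun x => weightedShift 1 (a x)) w =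
      weightedShift (w.length : G) (pathWeight a w.toList) := by
  induction w using FreeMonoid.inductionOn' with
  | one =>
    rw [map_one, ← weightedShift_zero_one, FreeMonoid.length_one, Nat.cast_zero]
    rfl
  | of_mul x w ih =>
    rw [map_mul, FreeMonoid.lift_eval_of, ih, weightedShift_mul_weightedShift,
      FreeMonoid.length_mul, FreeMonoid.length_of, Nat.cast_add, Nat.cast_one]
    congr 1
    funext i
    exact (pathWeight_cons a x w.toList i).symm

end Shift

section GenericWeights

theorem exists_forall_eval_ne_zero {σ ι R : Type*} [CommRing R] [IsDomain R] [Infinite R]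
    [Finite ι] (P : ι → MvPolynomial σ R) (hP : ∀ i, P i ≠ 0) :
    ∃ x : σ → R, ∀ i, MvPolynomial.eval x (P i) ≠ 0 := by
  have := Fintype.ofFinite ι
  by_contra! h
  have prod_ne_zero : ∏ i, P i ≠ 0 := Finset.prod_ne_zero_iff.2 fun i _ => hP i
  refine prod_ne_zero (MvPolynomial.funext fun x => ?_)
  obtain ⟨i, hi⟩ := h x
  rw [map_prod, map_zero]
  exact Finset.prod_eq_zero (Finset.mem_univ i) hi

variable {k α G : Type*}

theorem map_pathWeight {R S : Type*} [CommSemiring R] [CommSemiring S] [AddMonoidWithOne G]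
    (φ : R →+* S) (a : α → G → R) (w : List α) (i : G) :
    φ (pathWeight a w i) = pathWeight (fun x j => φ (a x j)) w i :=
  map_prod φ _ _

-- As `v.length ≤ n`, the path spelled by `v` visits no point twice, so the point `j` determines the
-- position, and hence the letter, read there.
theorem pathWeight_indicator {R : Type*} [CommSemiring R] [DecidableEq α] {n : ℕ} {v w : List α}
    (hvw : w.length = v.length) (hn : v.length ≤ n) (i : ZMod n) :
    pathWeight (fun x j => if v[(j - i).val]? = some x then (1 : R) else 0) w i =
      if w = v then 1 else 0 := by
  have val_offset (p : Fin w.length) : (i + (p : ℕ) - i).val = p := by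
    rw [add_sub_cancel_left, ZMod.val_natCast_of_lt (by lia)]
  have agree_iff : (∀ p : Fin w.length, v[(p : ℕ)]? = some w[p]) ↔ w = v := by
    refine ⟨fun h => List.ext_getElem hvw fun p hp hp' => ?_, ?_⟩
    · simpa [hp'] using (h ⟨p, hp⟩).symm
    · rintro rfl
      simp
  simp only [pathWeight, val_offset, Finset.prod_boole, Finset.mem_univ, true_imp_iff, agree_iff]

/-- The weight at `i` of the weighted shift by which a form acts when each generator `x` acts as
`weightedShift 1 (a x)`: the sum of the weights of its words, read as paths starting at `i`. -/
noncomputable def formWeight [CommSemiring k] [AddMonoidWithOne G] (g : FreeAlgebra k α)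
    (a : α → G → k) (i : G) : k :=
  ∑ w ∈ (wordCoeff g).support, wordCoeff g w * pathWeight a w.toList i

theorem IsWordHomogeneous.lift_weightedShift_one [CommSemiring k] [AddMonoidWithOne G] [Fintype G]
    [DecidableEq G] {g : FreeAlgebra k α} {m : ℕ} (hg : IsWordHomogeneous g m) (a : α → G → k) :
    FreeAlgebra.lift k (fun x => weightedShift 1 (a x)) g =
      weightedShift (m : G) (formWeight g a) := by
  calc FreeAlgebra.lift k (fun x => weightedShift 1 (a x)) g
      = ∑ w ∈ (wordCoeff g).support,
          weightedShift (m : G) (wordCoeff g w • pathWeight a w.toList) := by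
        rw [lift_eq_sum_wordCoeff]
        refine Finset.sum_congr rfl fun w hw => ?_
        rw [← hg w hw, ← smul_weightedShift, freeMonoid_lift_weightedShift_one]
    _ = weightedShift (m : G) (formWeight g a) := by
        rw [weightedShift_sum]
        congr 1
        ext i
        simp [formWeight]

theorem exists_forall_formWeight_ne_zero [Field k] [Infinite k] {g : FreeAlgebra k α} {m n : ℕ}
    [NeZero n] (hg : IsWordHomogeneous g m) (hg₀ : g ≠ 0) (hmn : m ≤ n) :
    ∃ a : α → ZMod n → k, ∀ i, formWeight g a i ≠ 0 := by
  classical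
  let P (i : ZMod n) : MvPolynomial (α × ZMod n) k :=
    ∑ w ∈ (wordCoeff g).support, MvPolynomial.C (wordCoeff g w) *
      pathWeight (fun x j => MvPolynomial.X (x, j)) w.toList i
  have eval_P (a : α × ZMod n → k) (i : ZMod n) :
      MvPolynomial.eval a (P i) = formWeight g (fun x j => a (x, j)) i := by
    simp [P, formWeight, map_pathWeight]
  obtain ⟨v, hv⟩ := Finsupp.support_nonempty_iff.2 (wordCoeff_ne_zero hg₀)
  have P_ne_zero (i : ZMod n) : P i ≠ 0 := by
    intro hP
    -- At the indicator weights of the path spelled by `v`, only the coefficient of `v` survives.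
    have coeff_eq := eval_P (fun y => if v.toList[(y.2 - i).val]? = some y.1 then 1 else 0) i
    rw [hP, map_zero, formWeight, Finset.sum_eq_single_of_mem v hv,
      pathWeight_indicator rfl ((hg v hv).trans_le hmn), if_pos rfl, mul_one] at coeff_eq
    · exact Finsupp.mem_support_iff.1 hv coeff_eq.symm
    · intro w hw hwv
      rw [pathWeight_indicator ((hg w hw).trans (hg v hv).symm) ((hg v hv).trans_le hmn),
        if_neg (FreeMonoid.toList.injective.ne hwv), mul_zero]
  obtain ⟨a, ha⟩ := exists_forall_eval_ne_zero P P_ne_zero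
  exact ⟨fun x j => a (x, j), fun i => eval_P a i ▸ ha i⟩

theorem hasSimpleSpectrum_weightedShift [Field k] [IsAlgClosed k] {m n : ℕ} [NeZero n]
    [NeZero (n : k)] (hmn : m.Coprime n) {g : ZMod n → k} (hg : ∀ i, g i ≠ 0) :
    HasSimpleSpectrum (weightedShift (m : ZMod n) g) := by
  obtain ⟨ζ, hζ⟩ := HasEnoughRootsOfUnity.exists_primitiveRoot k n
  let χ : AddChar (ZMod n) k := AddChar.zmodChar n hζ.pow_eq_one
  have hω : IsPrimitiveRoot (χ m) n := by
    rw [AddChar.zmodChar_apply']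
    exact hζ.pow_of_coprime m hmn
  obtain ⟨t, ht⟩ :=
    spectrum.nonempty_of_isAlgClosed_of_finiteDimensional k (weightedShift (m : ZMod n) g)
  have t_ne_zero : t ≠ 0 := by
    rintro rfl
    exact spectrum.zero_notMem k (isUnit_weightedShift _ fun i => (hg i).isUnit) ht
  have orbit_mem (p : ℕ) : χ m ^ p * t ∈ spectrum k (weightedShift (m : ZMod n) g) := by
    induction p with
    | zero => simpa using ht
    | succ p ih =>
      rw [← smul_spectrum_weightedShift χ, pow_succ', mul_assoc]
      exact Set.smul_mem_smul_set ih
  have orbit_injective : Function.Injective fun p : Fin n => χ m ^ (p : ℕ) * t := fun p q hpq =>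
    Fin.ext (hω.pow_inj p.2 q.2 (mul_right_cancel₀ t_ne_zero hpq))
  refine (ncard_spectrum_le_card _).antisymm ?_
  calc Fintype.card (ZMod n) = (Set.range fun p : Fin n => χ m ^ (p : ℕ) * t).ncard := by
        rw [← Set.image_univ, Set.ncard_image_of_injective _ orbit_injective, Set.ncard_univ,
          Nat.card_fin, ZMod.card]
    _ ≤ _ := Set.ncard_le_ncard (Set.range_subset_iff.2 fun p => orbit_mem p)
        (Matrix.finite_spectrum _)

end GenericWeights

section BlockSums

variable {k α ι κ : Type*} [Fintype ι] [DecidableEq ι] [Fintype κ] [DecidableEq κ]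

theorem map_freeAlgebra_lift {R A B : Type*} [CommSemiring R] [Semiring A] [Algebra R A]
    [Semiring B] [Algebra R B] (φ : A →ₐ[R] B) (X : α → A) (f : FreeAlgebra R α) :
    φ (FreeAlgebra.lift R X f) = FreeAlgebra.lift R (φ ∘ X) f := by
  refine DFunLike.congr_fun (?_ : φ.comp (FreeAlgebra.lift R X) = FreeAlgebra.lift R (φ ∘ X)) f
  ext x
  simp

theorem lift_fromBlocks [CommSemiring k] (X : α → Matrix ι ι k) (Y : α → Matrix κ κ k)
    (f : FreeAlgebra k α) :
    FreeAlgebra.lift k (fun x => Matrix.fromBlocks (X x) 0 0 (Y x)) f =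
      Matrix.fromBlocks (FreeAlgebra.lift k X f) 0 0 (FreeAlgebra.lift k Y f) := by
  induction f using FreeAlgebra.induction with
  | grade0 c =>
    simp [Algebra.algebraMap_eq_smul_one, ← Matrix.fromBlocks_one, Matrix.fromBlocks_smul]
  | grade1 x => simp
  | mul f g hf hg => simp [hf, hg, Matrix.fromBlocks_multiply]
  | add f g hf hg => simp [hf, hg, Matrix.fromBlocks_add]

variable [Field k]

/-- The polynomial `g` takes an invertible value with simple spectrum on matrices indexed by `ι`.
Invertibility is what allows the spectra of two such values to be separated by scaling. -/
def HasUnitSimpleValue (g : FreeAlgebra k α) (ι : Type*) [Fintype ι] [DecidableEq ι] : Prop :=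
  ∃ X : α → Matrix ι ι k,
    IsUnit (FreeAlgebra.lift k X g) ∧ HasSimpleSpectrum (FreeAlgebra.lift k X g)

theorem HasUnitSimpleValue.equiv {g : FreeAlgebra k α} (hg : HasUnitSimpleValue g ι)
    (e : ι ≃ κ) : HasUnitSimpleValue g κ := by
  obtain ⟨X, hunit, hsimple⟩ := hg
  have lift_eq := map_freeAlgebra_lift (Matrix.reindexAlgEquiv k k e).toAlgHom X g
  refine ⟨Matrix.reindexAlgEquiv k k e ∘ X, ?_, ?_⟩
  · exact lift_eq ▸ hunit.map (Matrix.reindexAlgEquiv k k e)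
  · exact lift_eq ▸ hsimple.reindex e

theorem HasUnitSimpleValue.sum [IsAlgClosed k] {g : FreeAlgebra k α} {m : ℕ}
    (hgm : IsWordHomogeneous g m) (hm : m ≠ 0) (hι : HasUnitSimpleValue g ι)
    (hκ : HasUnitSimpleValue g κ) : HasUnitSimpleValue g (ι ⊕ κ) := by
  obtain ⟨X, hX, hX'⟩ := hι
  obtain ⟨Y, hY, hY'⟩ := hκ
  obtain ⟨c, hc, hdisjoint⟩ :=
    exists_ne_zero_disjoint_spectrum_smul hX (FreeAlgebra.lift k Y g)
  obtain ⟨s, rfl⟩ := IsAlgClosed.exists_pow_nat_eq c (Nat.pos_of_ne_zero hm)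
  refine ⟨fun x => Matrix.fromBlocks (X x) 0 0 ((s • Y) x), ?_⟩
  rw [lift_fromBlocks, hgm.lift_smul]
  exact ⟨Matrix.isUnit_fromBlocks_zero₁₂.2 ⟨hX, hY.smul (Units.mk0 _ hc)⟩,
    hX'.fromBlocks_zero_zero (hY'.smul hc) hdisjoint⟩

/-- The sizes `n` for which a form of positive degree takes an invertible value with simple spectrum
on `n × n` matrices. -/
def unitSimpleSizes [IsAlgClosed k] {g : FreeAlgebra k α} {m : ℕ}
    (hgm : IsWordHomogeneous g m) (hm : m ≠ 0) : AddSubmonoid ℕ where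
  carrier := {n | HasUnitSimpleValue g (Fin n)}
  zero_mem' := ⟨0, isUnit_of_subsingleton _, (ncard_spectrum_le_card _).antisymm (by simp)⟩
  add_mem' ha hb := (ha.sum hgm hm hb).equiv finSumFinEquiv

theorem hasUnitSimpleValue_fin_of_coprime [IsAlgClosed k] {g : FreeAlgebra k α} {m n : ℕ}
    (hgm : IsWordHomogeneous g m) (hg : g ≠ 0) (hmn : m ≤ n) (hcoprime : m.Coprime n)
    (hn : (n : k) ≠ 0) : HasUnitSimpleValue g (Fin n) := by
  have : NeZero (n : k) := ⟨hn⟩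
  have : NeZero n := .of_neZero_natCast k
  obtain ⟨a, ha⟩ := exists_forall_formWeight_ne_zero hgm hg hmn
  suffices HasUnitSimpleValue g (ZMod n) from this.equiv (ZMod.finEquiv n).symm.toEquiv
  refine ⟨fun x => weightedShift 1 (a x), ?_⟩
  rw [hgm.lift_weightedShift_one]
  exact ⟨isUnit_weightedShift _ fun i => (ha i).isUnit, hasSimpleSpectrum_weightedShift hcoprime ha⟩

theorem exists_natCast_mul_add_one_ne_zero (R : Type*) [Ring R] [IsDomain R] :
    ∃ q : ℕ, q ≠ 0 ∧ ∀ r : ℕ, ((q * r + 1 : ℕ) : R) ≠ 0 := by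
  obtain ⟨p, _⟩ := ExpChar.exists R
  refine ⟨p, (expChar_pos R p).ne', fun r => ?_⟩
  cases ‹ExpChar R p› with
  | zero => exact Nat.cast_ne_zero.2 (Nat.succ_ne_zero _)
  | prime => simp

theorem exists_forall_ge_hasUnitSimpleValue_fin [IsAlgClosed k] {g : FreeAlgebra k α} {m : ℕ}
    (hgm : IsWordHomogeneous g m) (hg : g ≠ 0) (hm : m ≠ 0) :
    ∃ n₀ : ℕ, ∀ n ≥ n₀, HasUnitSimpleValue g (Fin n) := by
  obtain ⟨q, hq, hqk⟩ := exists_natCast_mul_add_one_ne_zero k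
  have size_mem (r : ℕ) (hr : r ≠ 0) : q * (m * r) + 1 ∈ unitSimpleSizes hgm hm := by
    refine hasUnitSimpleValue_fin_of_coprime hgm hg ?_ ?_ (hqk _)
    · exact (Nat.le_mul_of_pos_right m (by positivity : 0 < q * r)).trans (by lia)
    · rw [show q * (m * r) + 1 = 1 + m * (q * r) by ring]
      simp
  let S : Set ℕ := {q * (m * 1) + 1, q * (m * 2) + 1}
  have setGcd_eq_one : Nat.setGcd S = 1 := by
    have hdvd₁ : Nat.setGcd S ∣ q * (m * 1) + 1 := Nat.setGcd_dvd_of_mem (by simp [S])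
    have hdvd₂ : Nat.setGcd S ∣ q * (m * 2) + 1 := Nat.setGcd_dvd_of_mem (by simp [S])
    have two_mul_eq : 2 * (q * (m * 1) + 1) = q * (m * 2) + 1 + 1 := by ring
    exact Nat.dvd_one.1 ((Nat.dvd_add_right hdvd₂).1 (two_mul_eq ▸ hdvd₁.mul_left 2))
  obtain ⟨n₀, hn₀⟩ := Nat.exists_mem_closure_of_ge S
  refine ⟨n₀, fun n hn => ?_⟩
  have closure_le : AddSubmonoid.closure S ≤ unitSimpleSizes hgm hm :=
    AddSubmonoid.closure_le.2 (Set.insert_subset (size_mem 1 one_ne_zero)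
      (Set.singleton_subset_iff.2 (size_mem 2 two_ne_zero)))
  exact closure_le (hn₀ n hn (by simp [setGcd_eq_one]))

end BlockSums

section Separability

theorem separable_iff_isUnit_resultant_derivative {R : Type*} [CommRing R] {p : R[X]}
    (hp : p.Monic) :
    p.Separable ↔ IsUnit (p.resultant (derivative p) p.natDegree p.natDegree) := by
  obtain ⟨j, hj⟩ :=
    Nat.exists_eq_add_of_le ((natDegree_derivative_le p).trans (Nat.sub_le _ _))
  have coeff_natDegree : p.coeff p.natDegree = 1 := hp
  have resultant_eq :=
    resultant_add_right_deg p (derivative p) p.natDegree (derivative p).natDegree j le_rfl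
  rw [← hj, coeff_natDegree, one_pow, one_mul] at resultant_eq
  rw [resultant_eq, isUnit_resultant_iff_isCoprime hp, Separable]

theorem finite_setOf_not_separable_map_evalRingHom {k : Type*} [Field k] {P : k[X][X]}
    (hP : P.Monic) {s₀ : k} (hs₀ : (P.map (evalRingHom s₀)).Separable) :
    {s : k | ¬ (P.map (evalRingHom s)).Separable}.Finite := by
  set D : k[X] := P.resultant (derivative P) P.natDegree P.natDegree
  have separable_iff (s : k) : (P.map (evalRingHom s)).Separable ↔ ¬ D.IsRoot s := by
    rw [separable_iff_isUnit_resultant_derivative (hP.map _), hP.natDegree_map, derivative_map,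
      resultant_map_map, isUnit_iff_ne_zero]
    rfl
  have D_ne_zero : D ≠ 0 := fun h => (separable_iff s₀).1 hs₀ (by simp [h])
  simpa only [separable_iff, not_not] using finite_setOfPred_isRoot D_ne_zero

end Separability

section Degeneration

variable {k α ι : Type*} [Fintype ι] [DecidableEq ι]

/-- The value of the homogenization of `f` at the matrices `X`, the homogenizing variable being that
of `k[X]`. It interpolates between the leading form of `f`, at `0`, and rescaled values of `f`. -/
noncomputable def degeneration [CommSemiring k] (f : FreeAlgebra k α) (X : α → Matrix ι ι k) :
    Matrix ι ι k[X] :=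
  ∑ w ∈ (wordCoeff f).support,
    (Polynomial.X : k[X]) ^ (wordDegree f - w.length) • (wordCoeff f w • FreeMonoid.lift X w).map C

theorem degeneration_map_eval [CommSemiring k] (f : FreeAlgebra k α) (X : α → Matrix ι ι k)
    (s : k) :
    (degeneration f X).map (evalRingHom s) =
      ∑ w ∈ (wordCoeff f).support,
        s ^ (wordDegree f - w.length) • wordCoeff f w • FreeMonoid.lift X w := by
  ext i j
  simp [degeneration, Matrix.sum_apply, eval_finsetSum]

theorem degeneration_map_eval_zero [CommSemiring k] (f : FreeAlgebra k α) (X : α → Matrix ι ι k) :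
    (degeneration f X).map (evalRingHom 0) = FreeAlgebra.lift k X (leadingForm f) := by
  rw [degeneration_map_eval, lift_eq_sum_wordCoeff, wordCoeff_leadingForm,
    Finsupp.support_filter, Finset.sum_filter]
  refine Finset.sum_congr rfl fun w hw => ?_
  split_ifs with h
  · simp [h]
  · have := (length_le_wordDegree hw).lt_of_ne h
    rw [zero_pow (by lia), zero_smul]

theorem degeneration_map_eval_of_ne_zero [Field k] (f : FreeAlgebra k α) (X : α → Matrix ι ι k)
    {s : k} (hs : s ≠ 0) :
    (degeneration f X).map (evalRingHom s) =
      s ^ wordDegree f • FreeAlgebra.lift k (s⁻¹ • X) f := by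
  rw [degeneration_map_eval, lift_eq_sum_wordCoeff, Finset.smul_sum]
  refine Finset.sum_congr rfl fun w hw => ?_
  rw [freeMonoid_lift_smul, pow_sub₀ s hs (length_le_wordDegree hw), inv_pow, mul_smul,
    smul_comm _ (wordCoeff f w)]

theorem exists_hasSimpleSpectrum_lift_of_leadingForm [Field k] [IsAlgClosed k] {f : FreeAlgebra k α}
    {X : α → Matrix ι ι k} (hX : HasSimpleSpectrum (FreeAlgebra.lift k X (leadingForm f))) :
    ∃ Y : α → Matrix ι ι k, HasSimpleSpectrum (FreeAlgebra.lift k Y f) := by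
  have separable_iff (s : k) : ((degeneration f X).charpoly.map (evalRingHom s)).Separable ↔
      HasSimpleSpectrum ((degeneration f X).map (evalRingHom s)) := by
    rw [hasSimpleSpectrum_iff_separable_charpoly, Matrix.charpoly_map]
  rw [← degeneration_map_eval_zero, ← separable_iff] at hX
  obtain ⟨s, hs⟩ := ((finite_setOf_not_separable_map_evalRingHom
    (degeneration f X).charpoly_monic hX).insert 0).exists_notMem
  obtain ⟨hs₀, hs⟩ := not_or.1 hs
  rw [Set.mem_ofPred_eq, not_not, separable_iff, degeneration_map_eval_of_ne_zero f X hs₀] at hs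
  refine ⟨s⁻¹ • X, ?_⟩
  simpa [hs₀] using hs.smul (inv_ne_zero (pow_ne_zero (wordDegree f) hs₀))

end Degeneration

theorem exists_value_with_distinct_eigenvalues_general {k α : Type*} [Field k] [IsAlgClosed k]
    (f : FreeAlgebra k α) (hf : f ∉ Set.range (algebraMap k (FreeAlgebra k α))) :
    ∃ n₀ : ℕ, ∀ n : ℕ, n₀ ≤ n → ∃ X : α → Matrix (Fin n) (Fin n) k,
      ∃ mu : Fin n → k, Function.Injective mu ∧
        ∀ i : Fin n, ∃ v : Fin n → k, v ≠ 0 ∧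
          (FreeAlgebra.lift k X f).mulVec v = mu i • v := by
  have f_ne_zero : f ≠ 0 := fun h => hf ⟨0, by rw [h, map_zero]⟩
  obtain ⟨n₀, hn₀⟩ := exists_forall_ge_hasUnitSimpleValue_fin (isWordHomogeneous_leadingForm f)
    (leadingForm_ne_zero f_ne_zero) (wordDegree_ne_zero hf)
  refine ⟨n₀, fun n hn => ?_⟩
  obtain ⟨X, -, hX⟩ := hn₀ n hn
  obtain ⟨Y, hY⟩ := exists_hasSimpleSpectrum_lift_of_leadingForm hX
  exact ⟨Y, hY.exists_injective_eigenvalues⟩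

/-- A nonconstant noncommutative polynomial attains, for every large enough `n`,
a value with `n` pairwise distinct eigenvalues at some `n × n` matrix tuple. -/
theorem exists_value_with_distinct_eigenvalues
    (k : Type*) [Field k] [IsAlgClosed k] [CharZero k]
    (d : ℕ) (hd : 1 ≤ d) (f : FreeAlgebra k (Fin d))
    (hf : f ∉ Set.range (algebraMap k (FreeAlgebra k (Fin d)))) :
    ∃ n₀ : ℕ, ∀ n : ℕ, n₀ ≤ n →
      ∃ X : Fin d → Matrix (Fin n) (Fin n) k,
        ∃ mu : Fin n → k, Function.Injective mu ∧
          ∀ i : Fin n, ∃ v : Fin n → k, v ≠ 0 ∧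
            (ncEval X f).mulVec v = mu i • v :=
  exists_value_with_distinct_eigenvalues_general f hf
end
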